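/- arXiv:2006.03139 — 2 statements merged into one kernel-verified Lean document; each statement's English description precedes it below -/
import Mathlib

section
/- For every density matrix ρ on ℂ^n and every unitary matrix U ∈ U(n), the Shannon entropy of the diagonal of UρU* is at least the von Neumann entropy of ρ: Sh((UρU*)_{11},…,(UρU*)_{nn}) ≥ VN(ρ). -/
/-!
Diagonalise `ρ = V D V*` and put `W = U V`. The diagonal entries of `U ρ U* = W D W*` are
`∑ j, |W i j|² λ j`, and the matrix `|W i j|²` is doubly stochastic because `W` is unitary.
Jensen's inequality for the concave function `x ↦ -x log x` on `[0, ∞)` in each row, followed by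
summation over the rows, gives the claim.
-/

open Matrix ComplexOrder

/-- Shannon entropy of a (finitely indexed) probability vector, with the
convention `0 * log 0 = 0` (automatic since `Real.log 0 = 0`). -/
noncomputable def Sh {ι : Type*} [Fintype ι] (p : ι → ℝ) : ℝ :=
  -∑ i, p i * Real.log (p i)

/-- A density matrix: positive semidefinite with trace 1. -/
def IsDensityMatrix {ι : Type*} [Fintype ι] [DecidableEq ι]
    (ρ : Matrix ι ι ℂ) : Prop :=
  ρ.PosSemidef ∧ ρ.trace = 1

section DoublyStochastic

variable {ι R E β : Type*} [Fintype ι] [DecidableEq ι]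
  [Field R] [LinearOrder R] [IsStrictOrderedRing R] [AddCommGroup E] [Module R E]
  [AddCommGroup β] [PartialOrder β] [IsOrderedAddMonoid β] [Module R β] [IsStrictOrderedModule R β]

lemma sum_le_sum_of_concaveOn_of_mem_doublyStochastic {s : Set E} {f : E → β}
    (hf : ConcaveOn R s f) {P : Matrix ι ι R} (hP : P ∈ doublyStochastic R ι)
    {x : ι → E} (hx : ∀ j, x j ∈ s) :
    ∑ j, f (x j) ≤ ∑ i, f (∑ j, P i j • x j) :=
  calc ∑ j, f (x j)
    _ = ∑ j, (∑ i, P i j) • f (x j) := by simp only [sum_col_of_mem_doublyStochastic hP, one_smul]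
    _ = ∑ i, ∑ j, P i j • f (x j) := by simp only [Finset.sum_smul]; exact Finset.sum_comm
    _ ≤ ∑ i, f (∑ j, P i j • x j) := Finset.sum_le_sum fun i _ ↦
        hf.le_map_sum (fun _ _ ↦ nonneg_of_mem_doublyStochastic hP)
          (sum_row_of_mem_doublyStochastic hP i) fun j _ ↦ hx j

end DoublyStochastic

section RCLike

variable {ι m n 𝕜 : Type*} [RCLike 𝕜]

lemma sum_norm_sq_row_of_mul_conjTranspose_eq_one [Fintype n] [DecidableEq m]
    {W : Matrix m n 𝕜} (hW : W * Wᴴ = 1) (i : m) : ∑ j, ‖W i j‖ ^ 2 = 1 := by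
  have hii : (W * Wᴴ) i i = 1 := by rw [hW, one_apply_eq]
  simp only [mul_apply, conjTranspose_apply, RCLike.star_def, RCLike.mul_conj] at hii
  exact_mod_cast hii

lemma re_mul_diagonal_mul_conjTranspose_apply_self [Fintype n] [DecidableEq n]
    (W : Matrix m n 𝕜) (x : n → ℝ) (i : m) :
    RCLike.re ((W * diagonal (fun j ↦ (x j : 𝕜)) * Wᴴ) i i) = ∑ j, ‖W i j‖ ^ 2 * x j := by
  rw [mul_apply, map_sum]
  refine Finset.sum_congr rfl fun j _ ↦ ?_
  rw [mul_diagonal, conjTranspose_apply, RCLike.star_def, mul_right_comm, RCLike.mul_conj,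
    ← RCLike.ofReal_pow, ← RCLike.ofReal_mul, RCLike.ofReal_re]

variable [Fintype ι] [DecidableEq ι]

lemma map_norm_sq_mem_doublyStochastic {W : Matrix ι ι 𝕜} (hW : W ∈ unitaryGroup ι 𝕜) :
    W.map (‖·‖ ^ 2) ∈ doublyStochastic ℝ ι := by
  refine mem_doublyStochastic_iff_sum.mpr ⟨fun _ _ ↦ sq_nonneg _,
    sum_norm_sq_row_of_mul_conjTranspose_eq_one (mem_unitaryGroup_iff.mp hW), fun j ↦ ?_⟩
  have hWT : Wᵀ ∈ unitaryGroup ι 𝕜 := transpose_mem_unitaryGroup_iff.mpr hW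
  exact sum_norm_sq_row_of_mul_conjTranspose_eq_one (mem_unitaryGroup_iff.mp hWT) j

lemma re_unitary_conj_apply_self {A : Matrix ι ι 𝕜} (hA : A.IsHermitian)
    (U : unitaryGroup ι 𝕜) (i : ι) :
    RCLike.re (((U : Matrix ι ι 𝕜) * A * (U : Matrix ι ι 𝕜)ᴴ) i i) =
      ∑ j, ‖(U * hA.eigenvectorUnitary) i j‖ ^ 2 * hA.eigenvalues j := by
  have hconj : Unitary.conjStarAlgAut 𝕜 _ U A =
      Unitary.conjStarAlgAut 𝕜 _ (U * hA.eigenvectorUnitary)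
        (diagonal (RCLike.ofReal ∘ hA.eigenvalues)) := by
    conv_lhs => rw [hA.spectral_theorem, ← Unitary.conjStarAlgAut_mul_apply]
  rw [← re_mul_diagonal_mul_conjTranspose_apply_self]
  exact congrArg (fun B : Matrix ι ι 𝕜 ↦ RCLike.re (B i i)) hconj

lemma sum_eigenvalues_le_sum_re_diag_of_concaveOn {β : Type*} [AddCommGroup β] [PartialOrder β]
    [IsOrderedAddMonoid β] [Module ℝ β] [IsStrictOrderedModule ℝ β] {s : Set ℝ} {f : ℝ → β}
    (hf : ConcaveOn ℝ s f) {A : Matrix ι ι 𝕜} (hA : A.IsHermitian)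
    (hs : ∀ i, hA.eigenvalues i ∈ s) (U : unitaryGroup ι 𝕜) :
    ∑ i, f (hA.eigenvalues i) ≤
      ∑ i, f (RCLike.re (((U : Matrix ι ι 𝕜) * A * (U : Matrix ι ι 𝕜)ᴴ) i i)) := by
  simp only [re_unitary_conj_apply_self hA]
  exact sum_le_sum_of_concaveOn_of_mem_doublyStochastic hf
    (map_norm_sq_mem_doublyStochastic (U * hA.eigenvectorUnitary).2) hs

end RCLike

lemma Sh_eq_sum_negMulLog {ι : Type*} [Fintype ι] (p : ι → ℝ) :
    Sh p = ∑ i, Real.negMulLog (p i) := by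
  simp only [Sh, Real.negMulLog, neg_mul, Finset.sum_neg_distrib]

theorem diag_shannon_ge_vonNeumann_general {ι 𝕜 : Type*} [Fintype ι] [DecidableEq ι] [RCLike 𝕜]
    {ρ : Matrix ι ι 𝕜} (hρ : ρ.PosSemidef) (U : unitaryGroup ι 𝕜) :
    Sh hρ.1.eigenvalues ≤
      Sh fun i ↦ RCLike.re (((U : Matrix ι ι 𝕜) * ρ * (U : Matrix ι ι 𝕜)ᴴ) i i) := by
  simp only [Sh_eq_sum_negMulLog]
  exact sum_eigenvalues_le_sum_re_diag_of_concaveOn Real.concaveOn_negMulLog hρ.1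
    hρ.eigenvalues_nonneg U

/-- for every density matrix `ρ` and unitary `U`, the Shannon
entropy of the diagonal of `U ρ U*` is at least the von Neumann entropy of
`ρ` (the Shannon entropy of its eigenvalues). -/
theorem diag_shannon_ge_vonNeumann (n : ℕ)
    (ρ : Matrix (Fin n) (Fin n) ℂ) (hρ : IsDensityMatrix ρ)
    (U : Matrix.unitaryGroup (Fin n) ℂ) :
    Sh (fun i =>
        (((U : Matrix (Fin n) (Fin n) ℂ) * ρ *
          (U : Matrix (Fin n) (Fin n) ℂ)ᴴ) i i).re)
      ≥ Sh hρ.1.1.eigenvalues :=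
  diag_shannon_ge_vonNeumann_general hρ.1 U
end

section
/- For two-dimensional systems the contextual entropy is (at most) two-to-one: let ρ and σ be density matrices on ℂ². If for every orthogonal projection Q ∈ M_2(ℂ) with Q ≠ 0 and Q ≠ I one has Sh(Tr(ρQ), Tr(ρ(I−Q))) = Sh(Tr(σQ), Tr(σ(I−Q))), then σ = ρ or σ = I − ρ. -/
/-!
The binary entropy determines a probability `p` up to `p ↦ 1 - p`. Hence at every rank-one
projection `Q = v v*` equality of the entropies means that `Tr(ρQ) = Tr(σQ)` or
`Tr(ρQ) + Tr(σQ) = 1`, i.e. that the product of the Hermitian forms of `ρ - σ` and of `ρ + σ - 1`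
vanishes at `v`. On a line each form is a polynomial in one real variable, so one of the two forms
vanishes identically, and a Hermitian matrix is determined by its form.
-/

open Matrix ComplexOrder

section BinaryEntropy

open Real Set

theorem Sh_pair_eq_binEntropy (p : ℝ) : Sh ![p, 1 - p] = binEntropy p := by
  rw [binEntropy_eq_negMulLog_add_negMulLog_one_sub]
  simp only [Sh, negMulLog, Fin.sum_univ_two, cons_val_zero, cons_val_one]
  ring

theorem binEntropy_min_one_sub (p : ℝ) : binEntropy (min p (1 - p)) = binEntropy p := by
  rcases min_choice p (1 - p) with h | h <;> simp [h]

theorem binEntropy_eq_binEntropy_iff {p q : ℝ} (hp : p ∈ Icc 0 1) (hq : q ∈ Icc 0 1) :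
    binEntropy p = binEntropy q ↔ p = q ∨ p = 1 - q := by
  have min_mem {t : ℝ} (ht : t ∈ Icc 0 1) : min t (1 - t) ∈ Icc 0 2⁻¹ := by
    grind
  constructor
  · intro h
    have hmin : min p (1 - p) = min q (1 - q) :=
      binEntropy_strictMonoOn.injOn (min_mem hp) (min_mem hq) (by simpa [binEntropy_min_one_sub])
    grind
  · rintro (rfl | rfl) <;> simp

end BinaryEntropy

section QuadraticForm

open Polynomial

variable {R M : Type*} [CommRing R] [AddCommGroup M] [Module R M]

/-- The restriction of a quadratic form `q` to the line `t ↦ u + t • w`, as a polynomial in `t`. -/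
noncomputable def linePolynomial (q : QuadraticForm R M) (u w : M) : R[X] :=
  C (q u) + C (QuadraticMap.polar q u w) * X + C (q w) * X ^ 2

theorem eval_linePolynomial (q : QuadraticForm R M) (u w : M) (t : R) :
    (linePolynomial q u w).eval t = q (u + t • w) := by
  simp only [linePolynomial, eval_add, eval_mul, eval_C, eval_X, eval_pow,
    QuadraticMap.map_add q, QuadraticMap.map_smul, QuadraticMap.polar_smul_right, smul_eq_mul]
  ring

theorem linePolynomial_ne_zero_of_left {q : QuadraticForm R M} {u : M} (hu : q u ≠ 0) (w : M) :
    linePolynomial q u w ≠ 0 := fun h ↦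
  hu (by simpa [linePolynomial] using congrArg (coeff · 0) h)

theorem linePolynomial_ne_zero_of_right {q : QuadraticForm R M} (u : M) {w : M} (hw : q w ≠ 0) :
    linePolynomial q u w ≠ 0 := fun h ↦
  hw (by simpa [linePolynomial, coeff_X, coeff_C] using congrArg (coeff · 2) h)

theorem quadraticForm_eq_zero_or_eq_zero_of_mul_eq_zero [IsDomain R] [Infinite R]
    {q₁ q₂ : QuadraticForm R M} (h : ∀ v, q₁ v * q₂ v = 0) : q₁ = 0 ∨ q₂ = 0 := by
  by_contra! ⟨h₁, h₂⟩
  obtain ⟨u, hu⟩ := DFunLike.ne_iff.1 h₁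
  obtain ⟨w, hw⟩ := DFunLike.ne_iff.1 h₂
  have hmul : linePolynomial q₁ u w * linePolynomial q₂ u w = 0 :=
    Polynomial.funext fun t ↦ by simp [eval_linePolynomial, h]
  exact mul_ne_zero (linePolynomial_ne_zero_of_left hu w)
    (linePolynomial_ne_zero_of_right u hw) hmul

theorem quadraticForm_eq_zero_or_eq_zero_of_mul_eq_zero_on_sphere {E : Type*}
    [NormedAddCommGroup E] [NormedSpace ℝ E] {q₁ q₂ : QuadraticForm ℝ E}
    (h : ∀ v, ‖v‖ = 1 → q₁ v * q₂ v = 0) : q₁ = 0 ∨ q₂ = 0 := by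
  refine quadraticForm_eq_zero_or_eq_zero_of_mul_eq_zero fun v ↦ ?_
  rcases eq_or_ne v 0 with rfl | hv
  · simp
  · have hunit := h (‖v‖⁻¹ • v) (norm_smul_inv_norm (𝕜 := ℝ) hv)
    simpa [QuadraticMap.map_smul, hv] using hunit

end QuadraticForm

section ExpectationForm

variable {𝕜 ι : Type*} [RCLike 𝕜] [Fintype ι]

/-- The real quadratic form `v ↦ Re ⟨v, A v⟩` of a matrix `A`. For Hermitian `A` and a unit vector
`v` it is the expectation value of `A` in the pure state `v`. -/
noncomputable def expectationForm (A : Matrix ι ι 𝕜) : QuadraticForm ℝ (EuclideanSpace 𝕜 ι) :=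
  LinearMap.BilinMap.toQuadraticMap <|
    LinearMap.mk₂ ℝ (fun v w ↦ RCLike.re (star v.ofLp ⬝ᵥ A *ᵥ w.ofLp))
      (by simp [add_dotProduct]) (by simp [RCLike.smul_re])
      (by simp [mulVec_add]) (by simp [mulVec_smul, RCLike.smul_re])

theorem expectationForm_apply (A : Matrix ι ι 𝕜) (v : EuclideanSpace 𝕜 ι) :
    expectationForm A v = RCLike.re (star v.ofLp ⬝ᵥ A *ᵥ v.ofLp) := rfl

theorem expectationForm_eq_re_trace_mul_vecMulVec (A : Matrix ι ι 𝕜) (v : EuclideanSpace 𝕜 ι) :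
    expectationForm A v = RCLike.re (A * vecMulVec v.ofLp (star v.ofLp)).trace := by
  rw [expectationForm_apply, mul_vecMulVec, trace_vecMulVec, dotProduct_comm]

theorem eq_zero_of_expectationForm_eq_zero {A : Matrix ι ι 𝕜}
    (hA : A.IsHermitian) (h : expectationForm A = 0) : A = 0 := by
  classical
  rw [← hA.eigenvalues_eq_zero_iff]
  ext i
  rw [hA.eigenvalues_eq, ← expectationForm_apply, h]
  rfl

end ExpectationForm

section Projection

variable {𝕜 ι : Type*} [RCLike 𝕜] [Fintype ι]

theorem star_dotProduct_self_eq_one {v : EuclideanSpace 𝕜 ι} (hv : ‖v‖ = 1) :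
    star v.ofLp ⬝ᵥ v.ofLp = 1 := by
  rw [dotProduct_comm, ← EuclideanSpace.inner_eq_star_dotProduct, inner_self_eq_norm_sq_to_K, hv]
  simp

theorem isStarProjection_vecMulVec_star {v : EuclideanSpace 𝕜 ι} (hv : ‖v‖ = 1) :
    IsStarProjection (vecMulVec v.ofLp (star v.ofLp)) where
  isIdempotentElem := by
    rw [IsIdempotentElem, vecMulVec_mul_vecMulVec, star_dotProduct_self_eq_one hv, one_smul]
  isSelfAdjoint := by
    rw [IsSelfAdjoint, star_eq_conjTranspose, conjTranspose_vecMulVec, star_star]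

theorem trace_vecMulVec_star {v : EuclideanSpace 𝕜 ι} (hv : ‖v‖ = 1) :
    (vecMulVec v.ofLp (star v.ofLp)).trace = 1 := by
  rw [trace_vecMulVec, dotProduct_comm, star_dotProduct_self_eq_one hv]

theorem trace_mul_nonneg_of_isStarProjection {A Q : Matrix ι ι 𝕜} (hA : A.PosSemidef)
    (hQ : IsStarProjection Q) : 0 ≤ (A * Q).trace := by
  have htrace : (Qᴴ * A * Q).trace = (A * Q).trace := by
    rw [trace_mul_cycle, ← star_eq_conjTranspose, hQ.isSelfAdjoint.star_eq,
      hQ.isIdempotentElem.eq, trace_mul_comm]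
  exact htrace ▸ (hA.conjTranspose_mul_mul_same Q).trace_nonneg

end Projection

section DensityMatrix

variable {ι : Type*} [Fintype ι] [DecidableEq ι] {ρ σ Q : Matrix ι ι ℂ}

theorem re_trace_mul_one_sub (hρ : ρ.trace = 1) (Q : Matrix ι ι ℂ) :
    (ρ * (1 - Q)).trace.re = 1 - (ρ * Q).trace.re := by
  simp [mul_sub, hρ]

theorem re_trace_mul_mem_Icc (hρ : IsDensityMatrix ρ) (hQ : IsStarProjection Q) :
    (ρ * Q).trace.re ∈ Set.Icc 0 1 := by
  have hpos := Complex.re_le_re (trace_mul_nonneg_of_isStarProjection hρ.1 hQ)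
  have hpos' := Complex.re_le_re (trace_mul_nonneg_of_isStarProjection hρ.1 hQ.one_sub)
  rw [re_trace_mul_one_sub hρ.2] at hpos'
  exact ⟨hpos, sub_nonneg.1 hpos'⟩

theorem Sh_re_trace_eq_iff (hρ : IsDensityMatrix ρ) (hσ : IsDensityMatrix σ)
    (hQ : IsStarProjection Q) :
    Sh ![(ρ * Q).trace.re, (ρ * (1 - Q)).trace.re] = Sh ![(σ * Q).trace.re, (σ * (1 - Q)).trace.re]
      ↔ (ρ * Q).trace.re = (σ * Q).trace.re ∨ (ρ * Q).trace.re = 1 - (σ * Q).trace.re := by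
  rw [re_trace_mul_one_sub hρ.2, re_trace_mul_one_sub hσ.2, Sh_pair_eq_binEntropy,
    Sh_pair_eq_binEntropy, binEntropy_eq_binEntropy_iff (re_trace_mul_mem_Icc hρ hQ)
      (re_trace_mul_mem_Icc hσ hQ)]

theorem qubit_contextual_entropy_two_to_one_general
    (hρ : IsDensityMatrix ρ) (hσ : IsDensityMatrix σ)
    (h : ∀ Q : Matrix ι ι ℂ, IsStarProjection Q → Q.trace = 1 →
      Sh ![(ρ * Q).trace.re, (ρ * (1 - Q)).trace.re]
        = Sh ![(σ * Q).trace.re, (σ * (1 - Q)).trace.re]) :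
    σ = ρ ∨ σ = 1 - ρ := by
  have hmul (v : EuclideanSpace ℂ ι) (hv : ‖v‖ = 1) :
      expectationForm (ρ - σ) v * expectationForm (ρ + σ - 1) v = 0 := by
    have hQ := isStarProjection_vecMulVec_star hv
    have htr := trace_vecMulVec_star hv
    have hdichotomy := (Sh_re_trace_eq_iff hρ hσ hQ).1 (h _ hQ htr)
    simp only [expectationForm_eq_re_trace_mul_vecMulVec, sub_mul, add_mul, one_mul, trace_sub,
      trace_add, htr, RCLike.re_to_complex, Complex.sub_re, Complex.add_re, Complex.one_re]
    grind
  have hρH := hρ.1.isHermitian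
  have hσH := hσ.1.isHermitian
  rcases quadraticForm_eq_zero_or_eq_zero_of_mul_eq_zero_on_sphere hmul with hsub | hadd
  · exact .inl (sub_eq_zero.1 (eq_zero_of_expectationForm_eq_zero (hρH.sub hσH) hsub)).symm
  · have hsum := eq_zero_of_expectationForm_eq_zero ((hρH.add hσH).sub isHermitian_one) hadd
    exact .inr (eq_sub_of_add_eq' (sub_eq_zero.1 hsum))

end DensityMatrix

/-- on `ℂ²` the contextual entropy is at most two-to-one: if
two density matrices `ρ`, `σ` have the same contextual entropy at every
nontrivial projection `Q`, then `σ = ρ` or `σ = I − ρ`. -/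
theorem qubit_contextual_entropy_two_to_one
    (ρ σ : Matrix (Fin 2) (Fin 2) ℂ)
    (hρ : IsDensityMatrix ρ) (hσ : IsDensityMatrix σ)
    (h : ∀ Q : Matrix (Fin 2) (Fin 2) ℂ, Qᴴ = Q → Q * Q = Q → Q ≠ 0 → Q ≠ 1 →
      Sh ![((ρ * Q).trace).re, ((ρ * (1 - Q)).trace).re]
        = Sh ![((σ * Q).trace).re, ((σ * (1 - Q)).trace).re]) :
    σ = ρ ∨ σ = 1 - ρ :=
  qubit_contextual_entropy_two_to_one_general hρ hσ fun Q hQ htr ↦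
    h Q hQ.isSelfAdjoint hQ.isIdempotentElem
      (by rintro rfl; simp at htr) (by rintro rfl; simp at htr)
end
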